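/- arXiv:2405.14457 — 3 statements merged into one kernel-verified Lean document; each statement's English description precedes it below -/
import Mathlib

section
/- Let s > 0 and m, m' ∈ ℝ, and set μ = |m' − m| / s. Let P = N(m, s²) and Q = N(m', s²). Then for every randomized test φ : ℝ → [0,1] whose type I error α = ∫ φ dP lies in (0,1), the type II error satisfies 1 − ∫ φ dQ ≥ Φ(Φ⁻¹(1−α) − μ). (Neyman–Pearson lower bound: the trade-off function between two equal-variance Gaussians is bounded below by the Gaussian trade-off function G_μ.) -/
open MeasureTheory ProbabilityTheory Real

/-- The standard normal CDF `Φ`. -/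
noncomputable def Phi : ℝ → ℝ := fun x => cdf (gaussianReal 0 1) x

/-- The inverse `Φ⁻¹` of the standard normal CDF (as a function on `(0,1)`). -/
noncomputable def PhiInv : ℝ → ℝ := Function.invFun Phi

lemma Phi_continuous : Continuous Phi := by
  rw [continuous_iff_continuousAt]
  intro x
  have h := (monotone_cdf (gaussianReal 0 1)).continuousAt_iff_leftLim_eq_rightLim (x := x)
  refine h.2 ?_
  have : NullSingletonClass (gaussianReal 0 1) := nullSingletonClass_gaussianReal one_ne_zero
  have h1 := (cdf (gaussianReal 0 1)).measure_singleton x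
  rw [measure_cdf, measure_singleton] at h1
  have h2 := ENNReal.ofReal_eq_zero.1 h1.symm
  have h3 := (monotone_cdf (gaussianReal 0 1)).leftLim_le (le_refl x)
  rw [StieltjesFunction.rightLim_eq]
  linarith

lemma Phi_PhiInv {y : ℝ} (h0 : 0 < y) (h1 : y < 1) : Phi (PhiInv y) = y := by
  apply Function.invFun_eq
  have ha := ((tendsto_cdf_atBot (gaussianReal 0 1)).eventually (gt_mem_nhds h0)).exists
  have hb := ((tendsto_cdf_atTop (gaussianReal 0 1)).eventually (lt_mem_nhds h1)).exists
  obtain ⟨a, ha⟩ := ha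
  obtain ⟨b, hb⟩ := hb
  exact mem_range_of_exists_le_of_exists_ge Phi_continuous ⟨a, ha.le⟩ ⟨b, hb.le⟩

lemma gauss_Iic (ν t : ℝ) : (gaussianReal ν 1).real (Set.Iic t) = Phi (t - ν) := by
  have h : gaussianReal ν 1 = (gaussianReal 0 1).map (· + ν) := by
    rw [gaussianReal_map_add_const]; simp
  unfold Phi
  rw [h, cdf_eq_real, map_measureReal_apply (by fun_prop) measurableSet_Iic]
  congr 1
  ext x
  simp [le_sub_iff_add_le]

lemma core (ν t : ℝ) (hν : 0 ≤ ν) (ψ : ℝ → ℝ) (hm : Measurable ψ)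
    (h01 : ∀ x, ψ x ∈ Set.Icc (0 : ℝ) 1) (ht : Phi t = 1 - ∫ x, ψ x ∂(gaussianReal 0 1)) :
    Phi (t - ν) ≤ 1 - ∫ x, ψ x ∂(gaussianReal ν 1) := by
  classical
  set ind : ℝ → ℝ := (Set.Iic t).indicator 1 with hind
  set g : ℝ → ℝ := fun x => 1 - ind x - ψ x with hg
  have indm : Measurable ind := measurable_one.indicator measurableSet_Iic
  have ind01 : ∀ x, ind x ∈ Set.Icc (0 : ℝ) 1 := by
    intro x
    by_cases hx : x ∈ Set.Iic t <;> simp [hind, hx]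
  have ib : ∀ f : ℝ → ℝ, Measurable f → (∀ x, f x ∈ Set.Icc (0 : ℝ) 1) → ∀ a,
      Integrable f (gaussianReal a 1) := by
    intro f hf hf1 a
    refine Integrable.of_bound hf.aestronglyMeasurable 1 (Filter.Eventually.of_forall fun x => ?_)
    rw [Real.norm_eq_abs, abs_le]
    exact ⟨by linarith [(hf1 x).1], (hf1 x).2⟩
  have gm : Measurable g := (measurable_const.sub indm).sub hm
  have key : ∀ a, ∫ x, g x ∂(gaussianReal a 1) = 1 - Phi (t - a) - ∫ x, ψ x ∂(gaussianReal a 1) := by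
    intro a
    have i1 : Integrable (fun x => 1 - ind x) (gaussianReal a 1) :=
      (integrable_const _).sub (ib _ indm ind01 a)
    simp only [hg]
    rw [integral_sub i1 (ib _ hm h01 a), integral_sub (integrable_const _) (ib _ indm ind01 a), hind,
      integral_indicator_one measurableSet_Iic, gauss_Iic]
    simp
  have h0 := key 0
  have h1 := key ν
  rw [sub_zero, ht] at h0
  suffices 0 ≤ ∫ x, g x ∂(gaussianReal ν 1) by linarith
  have h2 : ∫ x, g x ∂(gaussianReal 0 1) = 0 := by linarith
  rw [integral_gaussianReal_eq_integral_smul one_ne_zero] at h2 ⊢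
  have gi : ∀ a, Integrable (fun x => gaussianPDFReal a 1 x • g x) := by
    intro a
    refine (integrable_gaussianPDFReal a 1).mono'
      ((measurable_gaussianPDFReal a 1).smul gm).aestronglyMeasurable
      (Filter.Eventually.of_forall fun x => ?_)
    have hp := gaussianPDFReal_nonneg a 1 x
    rw [norm_smul, Real.norm_of_nonneg hp]
    refine mul_le_of_le_one_right hp ?_
    rw [Real.norm_eq_abs, abs_le]
    have := ind01 x
    have := h01 x
    simp only [Set.mem_Icc] at *
    simp only [hg]
    constructor <;> linarith
  set k := rexp (ν * t - ν ^ 2 / 2) with hk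
  have h3 : 0 ≤ ∫ x, (gaussianPDFReal ν 1 x • g x - k * (gaussianPDFReal 0 1 x • g x)) := by
    refine integral_nonneg fun x => ?_
    have hq : gaussianPDFReal ν 1 x = gaussianPDFReal 0 1 x * rexp (ν * x - ν ^ 2 / 2) := by
      simp only [gaussianPDFReal]
      rw [mul_assoc _ (rexp _), ← Real.exp_add]
      congr 2
      simp
      ring
    have hp := gaussianPDFReal_nonneg 0 1 x
    have e : gaussianPDFReal ν 1 x • g x - k * (gaussianPDFReal 0 1 x • g x)
      = gaussianPDFReal 0 1 x * ((rexp (ν * x - ν ^ 2 / 2) - k) * g x) := by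
      rw [hq]; simp only [smul_eq_mul]; ring
    simp only [Pi.zero_apply]
    rw [e]
    refine mul_nonneg hp ?_
    have hx1 := h01 x
    by_cases hx : x ≤ t
    · refine mul_nonneg_of_nonpos_of_nonpos ?_ ?_
      · rw [sub_nonpos, hk, Real.exp_le_exp]
        nlinarith
      · have : ind x = 1 := by simp [hind, hx]
        simp only [hg, this]; linarith [hx1.1]
    · refine mul_nonneg ?_ ?_
      · rw [sub_nonneg, hk, Real.exp_le_exp]
        nlinarith
      · have : ind x = 0 := by simp [hind, hx]
        simp only [hg, this]; linarith [hx1.2]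
  rw [integral_sub (gi ν) ((gi 0).const_mul k), integral_const_mul, h2] at h3
  linarith

lemma gauss_map (m c a : ℝ) (v : NNReal) (hv : (v : ℝ) = c ^ 2) :
    gaussianReal (m + c * a) v = (gaussianReal a 1).map (fun z => m + c * z) := by
  have : (fun z : ℝ => m + c * z) = (fun z => m + z) ∘ (fun z => c * z) := rfl
  rw [this, ← Measure.map_map (by fun_prop) (by fun_prop), gaussianReal_map_const_mul,
    gaussianReal_map_const_add, add_comm]
  congr 1
  ext
  simp [hv]

/-- Neyman–Pearson lower bound: the trade-off function between two equal-variance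
Gaussians is bounded below by the Gaussian trade-off function `G_μ`. -/
theorem stmt_0 (s m m' : ℝ) (hs : 0 < s) (μ : ℝ) (hμ : μ = |m' - m| / s)
    (P Q : Measure ℝ) (hP : P = gaussianReal m (s ^ 2).toNNReal)
    (hQ : Q = gaussianReal m' (s ^ 2).toNNReal)
    (φ : ℝ → ℝ) (hφmeas : Measurable φ) (hφ01 : ∀ x, φ x ∈ Set.Icc (0 : ℝ) 1)
    (α : ℝ) (hα : α = ∫ x, φ x ∂P) (hα01 : α ∈ Set.Ioo (0 : ℝ) 1) :
    1 - ∫ x, φ x ∂Q ≥ Phi (PhiInv (1 - α) - μ) := by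
  subst hP hQ
  obtain ⟨c, hc, hcm⟩ : ∃ c : ℝ, c ^ 2 = s ^ 2 ∧ m' = m + c * μ := by
    rcases le_total 0 (m' - m) with h | h
    · refine ⟨s, rfl, ?_⟩
      rw [hμ, abs_of_nonneg h]; field_simp; ring
    · refine ⟨-s, by ring, ?_⟩
      rw [hμ, abs_of_nonpos h]; field_simp; ring
  have hv : (((s ^ 2).toNNReal : NNReal) : ℝ) = c ^ 2 := by
    rw [Real.coe_toNNReal _ (sq_nonneg s), hc]
  have e0 := gauss_map m c 0 _ hv
  have e1 := gauss_map m c μ _ hv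
  rw [mul_zero, add_zero] at e0
  rw [← hcm] at e1
  have hμ0 : 0 ≤ μ := by rw [hμ]; positivity
  rw [e0, integral_map (by fun_prop) hφmeas.aestronglyMeasurable] at hα
  rw [e1, integral_map (by fun_prop) hφmeas.aestronglyMeasurable]
  refine core μ _ hμ0 (fun z => φ (m + c * z)) (hφmeas.comp (by fun_prop)) (fun z => hφ01 _) ?_
  rw [Phi_PhiInv (by linarith [hα01.2]) (by linarith [hα01.1]), hα]
end

section
/- For all μ > 0, ε ≥ 0, and α ∈ (0,1), one has 1 − Φ(Φ⁻¹(1−α) − μ) ≤ e^ε·α + δ_μ(ε), where δ_μ(ε) = Φ(−ε/μ + μ/2) − e^ε·Φ(−ε/μ − μ/2). (This is the analytic core of the conversion from μ-GDP to (ε, δ)-differential privacy: the Gaussian trade-off function G_μ dominates the trade-off function f_{ε,δ_μ(ε)}.) -/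
open MeasureTheory ProbabilityTheory Real

lemma Phi_eq_int (x : ℝ) : Phi x = ∫ t in Set.Iic x, gaussianPDFReal 0 1 t := by
  have h := gaussianReal_apply_eq_integral 0 (one_ne_zero : (1 : NNReal) ≠ 0) (Set.Iic x)
  unfold Phi
  rw [cdf_eq_real, Measure.real, h, ENNReal.toReal_ofReal]
  exact integral_nonneg (fun t => gaussianPDFReal_nonneg 0 1 t)

lemma cont_pdf : Continuous (gaussianPDFReal 0 1) := by
  unfold gaussianPDFReal
  fun_prop

lemma Phi_hasDerivAt (x : ℝ) : HasDerivAt Phi (gaussianPDFReal 0 1 x) x := by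
  have hi := integrable_gaussianPDFReal 0 1
  have h : Phi = fun y => Phi 0 + ∫ t in (0:ℝ)..y, gaussianPDFReal 0 1 t := by
    funext y
    rw [← intervalIntegral.integral_Iic_sub_Iic hi.integrableOn hi.integrableOn,
      Phi_eq_int, Phi_eq_int]
    ring
  rw [h]
  exact (intervalIntegral.integral_hasDerivAt_right hi.intervalIntegrable
    (cont_pdf.stronglyMeasurableAtFilter _ _) cont_pdf.continuousAt).const_add _

lemma Phi_neg (x : ℝ) : Phi (-x) = 1 - Phi x := by
  have hn : gaussianReal 0 1 = (gaussianReal 0 1).map (fun x : ℝ => -x) := by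
    rw [gaussianReal_map_neg, neg_zero]
  have := nullSingletonClass_gaussianReal (μ := 0) (one_ne_zero : (1 : NNReal) ≠ 0)
  have h1 : (gaussianReal 0 1).real (Set.Iic (-x)) = (gaussianReal 0 1).real (Set.Ioi x) := by
    conv_lhs => rw [hn]
    rw [map_measureReal_apply measurable_neg measurableSet_Iic]
    have : (fun x : ℝ => -x) ⁻¹' Set.Iic (-x) = Set.Ici x := by ext; simp
    rw [this]
    exact measureReal_congr Ioi_ae_eq_Ici.symm
  unfold Phi
  rw [cdf_eq_real, cdf_eq_real, h1, ← Set.compl_Iic, probReal_compl_eq_one_sub measurableSet_Iic]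

lemma Phi_PhiInv_s3 (p : ℝ) (hp : p ∈ Set.Ioo (0 : ℝ) 1) : Phi (PhiInv p) = p := by
  apply Function.invFun_eq
  have hc : Continuous Phi := continuous_iff_continuousAt.2 fun x => (Phi_hasDerivAt x).continuousAt
  have h0 := tendsto_cdf_atBot (gaussianReal 0 1)
  have h1 := tendsto_cdf_atTop (gaussianReal 0 1)
  obtain ⟨a, ha⟩ := (h0.eventually (gt_mem_nhds hp.1)).exists
  obtain ⟨b, hb⟩ := (h1.eventually (lt_mem_nhds hp.2)).exists
  exact mem_range_of_exists_le_of_exists_ge hc ⟨a, ha.le⟩ ⟨b, hb.le⟩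

lemma pdf_shift (μ s : ℝ) :
    gaussianPDFReal 0 1 (s + μ) = Real.exp (-s * μ - μ ^ 2 / 2) * gaussianPDFReal 0 1 s := by
  unfold gaussianPDFReal
  rw [mul_left_comm, ← Real.exp_add]
  congr 2
  simp
  ring

lemma key (μ ε s : ℝ) (hμ : 0 < μ) :
    Phi (s + μ) - Real.exp ε * Phi s ≤
      Phi ((-ε / μ - μ / 2) + μ) - Real.exp ε * Phi (-ε / μ - μ / 2) := by
  set a := -ε / μ - μ / 2 with ha
  have haμ : a * μ = -ε - μ ^ 2 / 2 := by rw [ha]; field_simp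
  let h : ℝ → ℝ := fun s => Phi (s + μ) - Real.exp ε * Phi s
  have hd : ∀ s, HasDerivAt h
      ((Real.exp (-s * μ - μ ^ 2 / 2) - Real.exp ε) * gaussianPDFReal 0 1 s) s := by
    intro s
    have := ((Phi_hasDerivAt (s + μ)).comp_add_const s μ).sub
      ((Phi_hasDerivAt s).const_mul (Real.exp ε))
    rw [pdf_shift, ← sub_mul] at this
    exact this
  have hc : Continuous h := continuous_iff_continuousAt.2 fun x => (hd x).continuousAt
  change h s ≤ h a
  rcases le_total s a with hs | hs
  · refine monotoneOn_of_deriv_nonneg (convex_Iic a) hc.continuousOn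
      (fun x _ => (hd x).differentiableAt.differentiableWithinAt) ?_ hs
      (Set.mem_Iic.2 le_rfl) hs
    intro x hx
    rw [interior_Iic] at hx
    rw [(hd x).deriv]
    refine mul_nonneg (sub_nonneg.2 (Real.exp_le_exp.2 ?_)) (gaussianPDFReal_nonneg _ _ _)
    have := mul_le_mul_of_nonneg_right (le_of_lt hx) hμ.le
    linarith
  · refine antitoneOn_of_deriv_nonpos (convex_Ici a) hc.continuousOn
      (fun x _ => (hd x).differentiableAt.differentiableWithinAt) ?_
      (Set.mem_Ici.2 le_rfl) hs hs
    intro x hx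
    rw [interior_Ici] at hx
    rw [(hd x).deriv]
    refine mul_nonpos_of_nonpos_of_nonneg (sub_nonpos.2 (Real.exp_le_exp.2 ?_))
      (gaussianPDFReal_nonneg _ _ _)
    have := mul_le_mul_of_nonneg_right (le_of_lt hx) hμ.le
    linarith

/-- Analytic core of the conversion from `μ`-GDP to `(ε, δ)`-DP: the Gaussian
trade-off function `G_μ` dominates the trade-off function `f_{ε, δ_μ(ε)}`. -/
theorem stmt_3 (μ ε α : ℝ) (hμ : 0 < μ) (hε : 0 ≤ ε) (hα : α ∈ Set.Ioo (0 : ℝ) 1) :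
    1 - Phi (PhiInv (1 - α) - μ) ≤
      Real.exp ε * α + (Phi (-ε / μ + μ / 2) - Real.exp ε * Phi (-ε / μ - μ / 2)) := by
  have h1 := Phi_PhiInv_s3 (1 - α) ⟨by linarith [hα.2], by linarith [hα.1]⟩
  set t := PhiInv (1 - α)
  have h2 := key μ ε (-t) hμ
  rw [show -t + μ = -(t - μ) by ring, Phi_neg, Phi_neg, h1,
    show -ε / μ - μ / 2 + μ = -ε / μ + μ / 2 by ring] at h2
  linarith
end

section
/- Let s > 0 and C > 0, and let P = N(0, s²) and Q = N(C, s²). Then for every randomized test φ : ℝ → [0,1], the sum of type I and type II errors satisfies ∫ φ dP + (1 − ∫ φ dQ) ≥ 2·Φ(−C/(2s)); i.e., no randomized test for distinguishing the two Gaussians has smaller total error than the midpoint threshold test at h* = C/2. -/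
open MeasureTheory ProbabilityTheory Real

lemma aux_int (m : ℝ) (v : NNReal) (f : ℝ → ℝ) (hf : Measurable f)
    (h01 : ∀ x, f x ∈ Set.Icc (0 : ℝ) 1) :
    Integrable (fun x => gaussianPDFReal m v x * f x) := by
  refine (integrable_gaussianPDFReal m v).mono
    ((measurable_gaussianPDFReal m v).mul hf).aestronglyMeasurable ?_
  refine Filter.Eventually.of_forall fun x => ?_
  have := h01 x
  rw [norm_mul, Real.norm_of_nonneg this.1]
  exact mul_le_of_le_one_right (norm_nonneg _) this.2

lemma aux_main (C : ℝ) (hC : 0 < C) (v : NNReal) (hv : v ≠ 0) (φ : ℝ → ℝ) (hφ : Measurable φ)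
    (h01 : ∀ x, φ x ∈ Set.Icc (0 : ℝ) 1) :
    (gaussianReal 0 v).real (Set.Ioi (C / 2)) - (gaussianReal C v).real (Set.Ioi (C / 2)) ≤
      (∫ x, φ x ∂(gaussianReal 0 v)) - ∫ x, φ x ∂(gaussianReal C v) := by
  set ψ : ℝ → ℝ := (Set.Ioi (C / 2)).indicator 1 with hψ
  have hψm : Measurable ψ := measurable_one.indicator measurableSet_Ioi
  have hψ01 : ∀ x, ψ x ∈ Set.Icc (0 : ℝ) 1 := by
    intro x
    by_cases h : x ∈ Set.Ioi (C / 2) <;> simp [hψ, h]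
  rw [← integral_indicator_one measurableSet_Ioi, ← integral_indicator_one measurableSet_Ioi]
  simp only [integral_gaussianReal_eq_integral_smul hv, smul_eq_mul]
  rw [← integral_sub (aux_int _ _ _ hψm hψ01) (aux_int _ _ _ hψm hψ01),
    ← integral_sub (aux_int _ _ _ hφ h01) (aux_int _ _ _ hφ h01)]
  refine integral_mono ((aux_int _ _ _ hψm hψ01).sub (aux_int _ _ _ hψm hψ01))
    ((aux_int _ _ _ hφ h01).sub (aux_int _ _ _ hφ h01)) fun x => ?_
  have hx := h01 x
  have hv' : (0 : ℝ) < v := by positivity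
  by_cases h : C / 2 < x
  · have e : ψ x = 1 := by simp [hψ, h]
    have hpq : gaussianPDFReal 0 v x ≤ gaussianPDFReal C v x := by
      unfold gaussianPDFReal
      gcongr ?_ * rexp (?_ / ?_)
      nlinarith
    simp only [e]
    nlinarith [hx.2]
  · have e : ψ x = 0 := by simp [hψ, not_lt.1 h]
    have hpq : gaussianPDFReal C v x ≤ gaussianPDFReal 0 v x := by
      unfold gaussianPDFReal
      gcongr ?_ * rexp (?_ / ?_)
      nlinarith
    simp only [e]
    nlinarith [hx.1]

/-- For `P = N(0, s²)` and `Q = N(C, s²)`, no randomized test has total error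
(type I + type II) smaller than `2·Φ(−C/(2s))`, the total error of the midpoint
threshold test at `h* = C/2`. -/
theorem stmt_8 (s C : ℝ) (hs : 0 < s) (hC : 0 < C)
    (P Q : Measure ℝ) (hP : P = gaussianReal 0 (s ^ 2).toNNReal)
    (hQ : Q = gaussianReal C (s ^ 2).toNNReal)
    (φ : ℝ → ℝ) (hφmeas : Measurable φ) (hφ01 : ∀ x, φ x ∈ Set.Icc (0 : ℝ) 1) :
    (∫ x, φ x ∂P) + (1 - ∫ x, φ x ∂Q) ≥ 2 * Phi (-C / (2 * s)) := by
  subst hP hQ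
  have hv : (s ^ 2).toNNReal ≠ 0 := by
    have : 0 < (s ^ 2).toNNReal := Real.toNNReal_pos.2 (by positivity)
    exact this.ne'
  have key := aux_main C hC _ hv φ hφmeas hφ01
  have hm : ∀ m c : ℝ, c ^ 2 = s ^ 2 →
      (gaussianReal (c * m) (s ^ 2).toNNReal) = (gaussianReal m 1).map (fun x => c * x) := by
    intro m c hc
    rw [gaussianReal_map_const_mul]
    congr 1
    ext
    simp [hc, sq_nonneg]
  have h1 : (gaussianReal 0 (s ^ 2).toNNReal).real (Set.Ioi (C / 2)) = Phi (-C / (2 * s)) := by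
    rw [Phi, cdf_eq_real, measureReal_congr
      ((gaussianReal_absolutelyContinuous 0 hv).ae_eq Ioi_ae_eq_Ici)]
    have := hm 0 (-s) (by ring)
    rw [mul_zero] at this
    rw [this, map_measureReal_apply (by fun_prop) measurableSet_Ici]
    congr 1
    ext x
    simp only [Set.mem_preimage, Set.mem_Ici, Set.mem_Iic]
    rw [le_div_iff₀ (by positivity)]
    constructor <;> intro h <;> linarith
  have h2 : 1 - (gaussianReal C (s ^ 2).toNNReal).real (Set.Ioi (C / 2))
      = Phi (-C / (2 * s)) := by
    rw [← probReal_compl_eq_one_sub measurableSet_Ioi, Set.compl_Ioi, Phi, cdf_eq_real]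
    have h0 := hm 0 s rfl
    rw [mul_zero] at h0
    have : gaussianReal C (s ^ 2).toNNReal
        = (gaussianReal 0 (s ^ 2).toNNReal).map (fun x => x + C) := by
      rw [gaussianReal_map_add_const, zero_add]
    rw [this, map_measureReal_apply (by fun_prop) measurableSet_Iic, h0,
      map_measureReal_apply (by fun_prop) (measurableSet_Iic.preimage (by fun_prop))]
    congr 1
    ext x
    simp only [Set.mem_preimage, Set.mem_Iic]
    rw [le_div_iff₀ (by positivity), le_div_iff₀ (by positivity)]
    constructor <;> intro h <;> linarith
  linarith
end
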